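/- arXiv:2509.13264 — 3 statements merged into one kernel-verified Lean document; each statement's English description precedes it below -/
import Mathlib

section
/- Let p be an odd prime, let λ be a bar-partition with p-bar core λ_(p̄) and p-bar cocore λ^[p̄], and let σ be a σ_p-type automorphism of ℚ̄. If sgn(λ_(p̄)) = 1 or sgn(λ^[p̄]) = 1, then τ(λ,σ) = τ(λ_(p̄),σ)·τ(λ^[p̄],σ). -/
open scoped BigOperators

/-- A bar-partition: a finite set of distinct positive parts. -/
structure BarPartition where
  parts : Finset ℕ
  zero_not_mem : 0 ∉ parts

namespace BarPartition

/-- The size `|λ|` of a bar-partition: the sum of its parts. -/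
def size (l : BarPartition) : ℕ := ∑ a ∈ l.parts, a

/-- The length `ℓ(λ)` of a bar-partition: its number of parts. -/
def length (l : BarPartition) : ℕ := l.parts.card

/-- The sign `sgn(λ) = (-1)^(|λ| - ℓ(λ))` of a bar-partition. -/
def sgn (l : BarPartition) : ℤ := (-1) ^ (l.size - l.length)

/-- The empty bar-partition. -/
def empty : BarPartition := ⟨∅, by simp⟩

end BarPartition

/-- One `t`-bar removal step: replace a part `a > t` by `a - t` (if `a - t` is not already a
part), delete a part equal to `t`, or delete two parts whose sum is `t`. -/
def BarRemoval (t : ℕ) (μ ν : BarPartition) : Prop :=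
  (∃ a ∈ μ.parts, t < a ∧ a - t ∉ μ.parts ∧ ν.parts = insert (a - t) (μ.parts.erase a)) ∨
  (t ∈ μ.parts ∧ ν.parts = μ.parts.erase t) ∨
  (∃ a ∈ μ.parts, ∃ b ∈ μ.parts, a ≠ b ∧ a + b = t ∧ ν.parts = (μ.parts.erase a).erase b)

/-- A `t`-bar core: a bar-partition admitting no `t`-bar removal. -/
def IsBarCore (t : ℕ) (κ : BarPartition) : Prop := ∀ ν, ¬ BarRemoval t κ ν

/-- `κ` is the `t`-bar core of `λ`: it is obtained from `λ` by a (maximal) sequence of `t`-bar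
removals and admits no further removal. -/
def IsBarCoreOf (t : ℕ) (l κ : BarPartition) : Prop :=
  Relation.ReflTransGen (BarRemoval t) l κ ∧ IsBarCore t κ

/-- `λ` has empty `t`-bar core. -/
def HasEmptyBarCore (t : ℕ) (l : BarPartition) : Prop :=
  Relation.ReflTransGen (BarRemoval t) l BarPartition.empty

/-- The twisted runner at `r` (for `1 ≤ r ≤ (t-1)/2`) of the `t`-bar-abacus of `λ`, as a set
of integers: position `i ≥ 0` (above the fence) carries a bead iff `t*i + r` is a part of `λ`,
and position `i < 0` (slot `j = -(i+1)` below the fence) carries a bead iff `t*j + (t - r)` is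
*not* a part of `λ` (beads and empty slots of runner `t - r` are interchanged). -/
def twistedRunner (t r : ℕ) (l : BarPartition) : Set ℤ :=
  {i : ℤ | (0 ≤ i ∧ t * i.toNat + r ∈ l.parts) ∨
           (i < 0 ∧ t * (-(i + 1)).toNat + (t - r) ∉ l.parts)}

/-- Two bar-partitions have the same `t`-bar quotient: the runners `0` agree, and for each
`1 ≤ r ≤ (t-1)/2` the twisted runners differ by a shift (the shift by the unique balancing
integer produces the Frobenius symbol of the quotient component, so shift-equivalent twisted
runners are exactly those with equal quotient component). -/
def HasSameBarQuotient (t : ℕ) (l m : BarPartition) : Prop :=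
  (∀ k : ℕ, t * k ∈ l.parts ↔ t * k ∈ m.parts) ∧
  ∀ r : ℕ, 1 ≤ r → 2 * r < t →
    ∃ c : ℤ, twistedRunner t r m = (fun i => i + c) '' twistedRunner t r l

/-- `m` is the `t`-bar cocore of `l`: the unique bar-partition with empty `t`-bar core and the
same `t`-bar quotient as `l`. -/
def IsBarCocoreOf (t : ℕ) (l m : BarPartition) : Prop :=
  HasEmptyBarCore t m ∧ HasSameBarQuotient t l m

/-- A fixed algebraic closure of `ℚ`. -/
abbrev Qbar := AlgebraicClosure ℚ

/-- `σ` is a `σ_p`-type automorphism of `ℚ̄`: it raises every root of unity of order coprime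
to `p` to its `p`-th power, and fixes every root of unity of `p`-power order. -/
def IsSigmaPType (p : ℕ) (σ : Qbar ≃ₐ[ℚ] Qbar) : Prop :=
  (∀ (ζ : Qbar) (n : ℕ), 0 < n → Nat.Coprime n p → ζ ^ n = 1 → σ ζ = ζ ^ p) ∧
  (∀ (ζ : Qbar) (k : ℕ), ζ ^ (p ^ k) = 1 → σ ζ = ζ)

/-- The discriminant `D_λ` attached to a bar-partition `λ` of `n` with `k` parts:
`2·(−1)^((n−k+1)/2)·λ₁⋯λ_k` if `n − k` is odd, and `(−1)^((n−k)/2)·λ₁⋯λ_k` if `n − k` is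
even. -/
def barDisc (l : BarPartition) : ℤ :=
  if (l.size - l.length) % 2 = 1 then
    2 * (-1) ^ ((l.size - l.length + 1) / 2) * ∏ a ∈ l.parts, (a : ℤ)
  else
    (-1) ^ ((l.size - l.length) / 2) * ∏ a ∈ l.parts, (a : ℤ)

/-!
Write `D_λ = E_λ P_λ`, where `P_λ` is the product of the parts divisible by `p`. The core `κ` has no
such part and the cocore `μ` has the same ones as `λ`, so `D_λ E_κ E_μ = E_λ D_κ D_μ`. As `E` is
prime to `p`, quadratic Gauss sums and reciprocity give `σ √E = J(E | p) √E`, and everything reduces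
to `J(E_λ | p) = J(E_κ E_μ | p)`.

Replace each part prime to `p` by the absolute value of its residue in `(-p/2, p/2)`. This costs
`J((-1)^u | p)`, with `u` the number of negative residues, and leaves a product of Jacobi symbols
that no bar removal changes, so that it is the same for `λ` and `κ` and equal to `1` for `μ`. The
power of `-1` and the factor `2` in `D_λ` combine with `(-1)^u` to a function of
`|λ| - ℓ(λ) + 2u`. This number is additive along core and cocore; for the summand `|λ|` one computes
how the number and the sum of the parts on a twisted runner change under a shift. The function is
multiplicative as soon as one of the two arguments is even, as the sign condition ensures.
-/

open scoped NumberTheorySymbols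

/-! ### Square roots of integers and Jacobi symbols -/

/-- `σ` acts on the roots of unity of order prime to `t` as the power map `ζ ↦ ζ ^ t`. For a prime
`t` this is the first half of being of `σ_t`-type. -/
def ActsAsFrobenius {K : Type*} [Field K] (t : ℕ) (σ : K → K) : Prop :=
  ∀ (ζ : K) (n : ℕ), 0 < n → n.Coprime t → ζ ^ n = 1 → σ ζ = ζ ^ t

/-- `σ` multiplies the square roots of the integer `D` by the integer `e`. For `D ≠ 0` and an
automorphism `σ`, this says `e = τ(D, σ)`. -/
def ScalesSqrt {K : Type*} [Field K] (σ : K → K) (D e : ℤ) : Prop :=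
  ∀ α : K, α ^ 2 = (D : K) → σ α = (e : K) * α

namespace ScalesSqrt

theorem unique {K : Type*} [Field K] [IsAlgClosed K] [CharZero K] {σ : K → K} {D d e : ℤ}
    (hD : D ≠ 0) (hd : ScalesSqrt σ D d) (he : ScalesSqrt σ D e) : d = e := by
  obtain ⟨α, hα⟩ := IsAlgClosed.exists_pow_nat_eq (D : K) two_pos
  have hα₀ : α ≠ 0 := by
    rintro rfl
    exact hD (by simpa using hα.symm)
  exact_mod_cast mul_right_cancel₀ hα₀ ((hd α hα).symm.trans (he α hα))

variable {K F : Type*} [Field K] [FunLike F K K] [RingHomClass F K K] {σ : F} {D E d e : ℤ}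

theorem of_apply {α : K} (hα : α ^ 2 = D) (hσα : σ α = d * α) : ScalesSqrt σ D d := by
  intro β hβ
  rcases sq_eq_sq_iff_eq_or_eq_neg.1 (hβ.trans hα.symm) with rfl | rfl
  · exact hσα
  · rw [map_neg, hσα, mul_neg]

theorem one : ScalesSqrt σ 1 1 :=
  of_apply (α := (1 : K)) (by simp) (by simp)

variable [IsAlgClosed K]

theorem mul (hD : ScalesSqrt σ D d) (hE : ScalesSqrt σ E e) : ScalesSqrt σ (D * E) (d * e) := by
  obtain ⟨α, hα⟩ := IsAlgClosed.exists_pow_nat_eq (D : K) two_pos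
  obtain ⟨β, hβ⟩ := IsAlgClosed.exists_pow_nat_eq (E : K) two_pos
  refine of_apply (α := α * β) (by rw [mul_pow, hα, hβ, Int.cast_mul]) ?_
  rw [map_mul, hD α hα, hE β hβ, Int.cast_mul, mul_mul_mul_comm]

end ScalesSqrt

namespace ActsAsFrobenius

variable {K F : Type*} [Field K] [IsAlgClosed K] [FunLike F K K] [RingHomClass F K K]
  {σ : F} {t : ℕ}

theorem scalesSqrt_neg_one (hσ : ActsAsFrobenius t σ) (ht : Odd t) :
    ScalesSqrt σ (-1) J(-1 | t) := by
  obtain ⟨i, hi⟩ := IsAlgClosed.exists_pow_nat_eq (-1 : K) two_pos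
  have hi4 : i ^ 4 = 1 := by rw [show 4 = 2 * 2 from rfl, pow_mul, hi, neg_one_sq]
  refine .of_apply (α := i) (by simpa using hi) ?_
  rw [hσ i 4 four_pos (ht.coprime_two_left.pow_left 2) hi4, jacobiSym.at_neg_one ht,
    ZMod.χ₄_nat_eq_if_mod_four, if_neg (by grind), pow_eq_pow_mod t hi4]
  have hmod : t % 4 = 1 ∨ t % 4 = 3 := by grind
  rcases hmod with h | h <;> rw [h]
  · simp
  · simp [pow_succ i 2, hi]

theorem scalesSqrt_two (hσ : ActsAsFrobenius t σ) (ht : Odd t) : ScalesSqrt σ 2 J(2 | t) := by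
  obtain ⟨z, hz⟩ := IsAlgClosed.exists_pow_nat_eq (-1 : K) four_pos
  have hz8 : z ^ 8 = 1 := by rw [show 8 = 4 * 2 from rfl, pow_mul, hz, neg_one_sq]
  refine .of_apply (α := z - z ^ 3) (by push_cast; linear_combination (-2 + z ^ 2) * hz) ?_
  rw [map_sub, map_pow, hσ z 8 (by norm_num) (ht.coprime_two_left.pow_left 3) hz8,
    jacobiSym.at_two ht, ZMod.χ₈_nat_eq_if_mod_eight, if_neg (by grind), pow_eq_pow_mod t hz8]
  have hmod : t % 8 = 1 ∨ t % 8 = 3 ∨ t % 8 = 5 ∨ t % 8 = 7 := by grind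
  rcases hmod with h | h | h | h
  · rw [h, if_pos (by decide)]
    push_cast
    ring
  · rw [h, if_neg (by decide)]
    push_cast
    linear_combination -z * hz8
  · rw [h, if_neg (by decide)]
    push_cast
    linear_combination (z - z ^ 3) * hz - z ^ 7 * hz8
  · rw [h, if_pos (by decide)]
    push_cast
    linear_combination (z ^ 3 - z) * hz - (z ^ 13 + z ^ 5) * hz8

/-- The quadratic Gauss sum is a square root of `±q`, and raising its `q`-th roots of unity to the
`t`-th power multiplies it by `J(t | q)`. -/
theorem scalesSqrt_chi_four_mul_prime [CharZero K] (hσ : ActsAsFrobenius t σ) {q : ℕ}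
    (hq : q.Prime) (hq2 : q ≠ 2) (hqt : q.Coprime t) :
    ScalesSqrt σ (ZMod.χ₄ q * q) J(t | q) := by
  have : Fact q.Prime := ⟨hq⟩
  obtain ⟨ζ, hζ⟩ := HasEnoughRootsOfUnity.exists_primitiveRoot K q
  let χ : MulChar (ZMod q) K := (quadraticChar (ZMod q)).ringHomComp (Int.castRingHom K)
  let ψ : AddChar (ZMod q) K := AddChar.zmodChar q hζ.pow_eq_one
  have hchar : ringChar (ZMod q) ≠ 2 := by rwa [ZMod.ringChar_zmod_n]
  have hχ (n : ℤ) : χ n = J(n | q) := by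
    rw [← jacobiSym.legendreSym.to_jacobiSym]
    rfl
  have hsq : gaussSum χ ψ ^ 2 = ((ZMod.χ₄ q * q : ℤ) : K) := by
    rw [gaussSum_sq ((MulChar.ringHomComp_ne_one_iff Int.cast_injective).2
      (quadraticChar_ne_one hchar)) ((quadraticChar_isQuadratic (ZMod q)).comp _)
      (AddChar.zmodChar_primitive_of_primitive_root q hζ), MulChar.ringHomComp_apply,
      quadraticChar_neg_one hchar, ZMod.card]
    simp
  have hχσ (a : ZMod q) : σ (χ a) = χ a := map_intCast σ _
  have hψσ (a : ZMod q) : σ (ψ a) = ψ.mulShift t a := by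
    have hpow : ψ a ^ q = 1 := by rw [← AddChar.map_nsmul_eq_pow]; simp
    rw [hσ (ψ a) q hq.pos hqt hpow, ← AddChar.map_nsmul_eq_pow, nsmul_eq_mul,
      AddChar.mulShift_apply]
  have hσsum : σ (gaussSum χ ψ) = gaussSum χ (ψ.mulShift t) := by
    simp only [gaussSum, map_sum, map_mul, hχσ, hψσ]
  have hχt : (χ t : K) * χ t = 1 := by
    rw [← Int.cast_natCast t, hχ, ← Int.cast_mul, ← sq, jacobiSym.sq_one (by simpa using hqt.symm),
      Int.cast_one]
  have hshift : χ t * gaussSum χ (ψ.mulShift t) = gaussSum χ ψ := by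
    simpa using gaussSum_mulShift χ ψ (ZMod.unitOfCoprime t hqt.symm)
  refine .of_apply hsq ?_
  rw [hσsum, ← hχ, Int.cast_natCast, ← hshift, ← mul_assoc, hχt, one_mul]

theorem scalesSqrt_prime [CharZero K] (hσ : ActsAsFrobenius t σ) (ht : Odd t) {q : ℕ}
    (hq : q.Prime) (hqt : q.Coprime t) : ScalesSqrt σ q J(q | t) := by
  rcases hq.eq_two_or_odd' with rfl | hqodd
  · exact hσ.scalesSqrt_two ht
  have hχ₄ : ScalesSqrt σ (ZMod.χ₄ q) J(ZMod.χ₄ q | t) := by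
    rw [ZMod.χ₄_nat_eq_if_mod_four, if_neg (by grind)]
    split_ifs
    · simpa only [jacobiSym.one_left] using ScalesSqrt.one
    · exact hσ.scalesSqrt_neg_one ht
  have hχ₄_sq : ZMod.χ₄ q * ZMod.χ₄ q = 1 := by
    rw [ZMod.χ₄_nat_eq_if_mod_four, if_neg (by grind)]
    split_ifs <;> rfl
  have hq2 : q ≠ 2 := by
    rintro rfl
    exact absurd hqodd (by decide)
  have key := hχ₄.mul (hσ.scalesSqrt_chi_four_mul_prime hq hq2 hqt)
  rwa [← mul_assoc, hχ₄_sq, one_mul, ← qrSign, qrSign.symm hqodd ht,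
    ← jacobiSym.quadratic_reciprocity' hqodd ht] at key

theorem scalesSqrt_natCast [CharZero K] (hσ : ActsAsFrobenius t σ) (ht : Odd t) (n : ℕ) :
    n.Coprime t → ScalesSqrt σ n J(n | t) := by
  induction n using induction_on_primes with
  | zero => exact fun _ α hα => by simp_all
  | one => simpa using ScalesSqrt.one (σ := σ)
  | prime_mul q n hq ih =>
    intro hqn
    rw [Nat.cast_mul, jacobiSym.mul_left]
    exact (hσ.scalesSqrt_prime ht hq hqn.coprime_mul_right).mul (ih hqn.coprime_mul_left)

theorem scalesSqrt_of_isCoprime [CharZero K] (hσ : ActsAsFrobenius t σ) (ht : Odd t) {D : ℤ}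
    (hD : IsCoprime D t) : ScalesSqrt σ D J(D | t) := by
  obtain ⟨n, rfl | rfl⟩ := D.eq_nat_or_neg
  · exact hσ.scalesSqrt_natCast ht n (Nat.isCoprime_iff_coprime.1 hD)
  · rw [neg_eq_neg_one_mul, jacobiSym.mul_left]
    exact (hσ.scalesSqrt_neg_one ht).mul
      (hσ.scalesSqrt_natCast ht n (Nat.isCoprime_iff_coprime.1 ((IsCoprime.neg_left_iff _ _).1 hD)))

end ActsAsFrobenius

/-! ### Bar removals and bar cores -/

@[to_additive]
theorem BarRemoval.prod_eq {M : Type*} [CommMonoid M] {t : ℕ} {g : ZMod t → M} (h0 : g 0 = 1)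
    (hneg : ∀ a, g a * g (-a) = 1) {l m : BarPartition} (h : BarRemoval t l m) :
    ∏ x ∈ l.parts, g x = ∏ x ∈ m.parts, g x := by
  rcases h with ⟨a, ha, hta, hn, hm⟩ | ⟨ht, hm⟩ | ⟨a, ha, b, hb, hab, hsum, hm⟩
  · rw [hm, Finset.prod_insert (mt Finset.mem_of_mem_erase hn), ← Finset.mul_prod_erase _ _ ha,
      Nat.cast_sub hta.le, ZMod.natCast_self, sub_zero]
  · rw [hm, ← Finset.mul_prod_erase _ _ ht, ZMod.natCast_self, h0, one_mul]
  · have hb' : (b : ZMod t) = -a := by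
      rw [eq_neg_iff_add_eq_zero, ← Nat.cast_add, add_comm, hsum, ZMod.natCast_self]
    rw [hm, ← Finset.mul_prod_erase _ _ ha,
      ← Finset.mul_prod_erase _ _ (Finset.mem_erase.2 ⟨hab.symm, hb⟩), hb', ← mul_assoc, hneg,
      one_mul]

@[to_additive]
theorem prod_eq_of_reflTransGen_barRemoval {M : Type*} [CommMonoid M] {t : ℕ} {g : ZMod t → M}
    (h0 : g 0 = 1) (hneg : ∀ a, g a * g (-a) = 1) {l m : BarPartition}
    (h : Relation.ReflTransGen (BarRemoval t) l m) :
    ∏ x ∈ l.parts, g x = ∏ x ∈ m.parts, g x := by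
  induction h with
  | refl => rfl
  | tail _ hstep ih => rw [ih, hstep.prod_eq h0 hneg]

namespace IsBarCore

variable {t : ℕ} {κ : BarPartition}

theorem sub_mem (hκ : IsBarCore t κ) {a : ℕ} (ha : a ∈ κ.parts) (hta : t < a) :
    a - t ∈ κ.parts := by
  by_contra hn
  refine hκ ⟨insert (a - t) (κ.parts.erase a), ?_⟩ (.inl ⟨a, ha, hta, hn, rfl⟩)
  simp [κ.zero_not_mem, (Nat.sub_pos_of_lt hta).ne]

theorem not_mem_self (hκ : IsBarCore t κ) : t ∉ κ.parts := fun ht =>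
  hκ ⟨κ.parts.erase t, by simp [κ.zero_not_mem]⟩ (.inr (.inl ⟨ht, rfl⟩))

theorem add_ne (hκ : IsBarCore t κ) {a b : ℕ} (ha : a ∈ κ.parts) (hb : b ∈ κ.parts)
    (hab : a ≠ b) : a + b ≠ t := fun hsum =>
  hκ ⟨(κ.parts.erase a).erase b, by simp [κ.zero_not_mem]⟩
    (.inr (.inr ⟨a, ha, b, hb, hab, hsum, rfl⟩))

theorem not_dvd (hκ : IsBarCore t κ) {x : ℕ} (hx : x ∈ κ.parts) : ¬ t ∣ x := by
  induction x using Nat.strong_induction_on with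
  | h x ih =>
    intro htx
    have hx0 : 0 < x := Nat.pos_of_ne_zero fun h => κ.zero_not_mem (h ▸ hx)
    rcases (Nat.le_of_dvd hx0 htx).eq_or_lt with rfl | hlt
    · exact hκ.not_mem_self hx
    · exact ih (x - t) (Nat.sub_lt hx0 (Nat.pos_of_dvd_of_pos htx hx0)) (hκ.sub_mem hx hlt)
        (Nat.dvd_sub htx dvd_rfl)

theorem filter_dvd_eq_empty (hκ : IsBarCore t κ) :
    {x ∈ κ.parts | t ∣ x} = ∅ :=
  Finset.filter_eq_empty_iff.2 fun _ => hκ.not_dvd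

end IsBarCore

/-! ### Charge and energy of a set of bead positions -/

/-- The excess of a set `S` of bead positions over the vacuum, in which exactly the negative
positions carry a bead: `1` at a bead of nonnegative position, `-1` at a gap of negative position,
and `0` elsewhere. -/
noncomputable def excess (S : Set ℤ) (i : ℤ) : ℤ :=
  S.indicator 1 i - (Set.Iio 0).indicator 1 i

theorem hasFiniteSupport_excess_Iio (c : ℤ) : (excess (Set.Iio c)).HasFiniteSupport := by
  refine (Set.finite_Icc (min c 0) (max c 0)).subset fun i hi => ?_
  by_contra hmem
  simp only [excess, Set.indicator_apply, Set.mem_Iio, Set.mem_Icc, Function.mem_support] at hi hmem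
  grind

theorem excess_image_add (S : Set ℤ) (c i : ℤ) :
    excess ((· + c) '' S) i = excess S (i - c) + excess (Set.Iio c) i := by
  classical
  simp [excess, Set.indicator_apply, Set.image_add_right, sub_eq_add_neg]

theorem finsum_mul_excess_Iio {f F : ℤ → ℤ} (hF : ∀ i, F (i + 1) - F i = f i) (c : ℤ) :
    ∑ᶠ i, f i * excess (Set.Iio c) i = F c - F 0 := by
  have hstep (c : ℤ) : ∑ᶠ i, f i * excess (Set.Iio (c + 1)) i =
      ∑ᶠ i, f i * excess (Set.Iio c) i + (F (c + 1) - F c) := by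
    have hsplit (i : ℤ) : f i * excess (Set.Iio (c + 1)) i =
        f i * excess (Set.Iio c) i + if i = c then f i else 0 := by
      simp only [excess, Set.indicator_apply, Set.mem_Iio, Pi.one_apply]
      grind
    simp only [hsplit]
    rw [finsum_add_distrib, finsum_eq_single (fun i => if i = c then f i else 0) c
      fun i hi => if_neg hi, if_pos rfl, hF]
    · exact (hasFiniteSupport_excess_Iio c).subset (Function.support_mul_subset_right _ _)
    · exact (Set.finite_singleton c).subset fun i hi => by by_contra h; simp_all
  induction c using Int.induction_on with
  | zero => simp [excess]
  | succ n ih => rw [hstep, ih]; ring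
  | pred n ih =>
    have h := hstep (-n - 1)
    rw [sub_add_cancel, ih] at h
    linarith

theorem finsum_mul_excess_image_add {S : Set ℤ} (hS : (excess S).HasFiniteSupport)
    {f F : ℤ → ℤ} (hF : ∀ i, F (i + 1) - F i = f i) (c : ℤ) :
    ∑ᶠ i, f i * excess ((· + c) '' S) i =
      ∑ᶠ i, f (i + c) * excess S i + (F c - F 0) := by
  have hshift : ∑ᶠ i, f i * excess S (i - c) = ∑ᶠ i, f (i + c) * excess S i := by
    rw [← finsum_comp_equiv (Equiv.addRight c)]
    simp
  simp only [excess_image_add, mul_add]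
  rw [finsum_add_distrib, hshift, finsum_mul_excess_Iio hF]
  · refine (hS.image (· + c)).subset fun i hi => ⟨i - c, right_ne_zero_of_mul hi, by simp⟩
  · exact (hasFiniteSupport_excess_Iio c).subset (Function.support_mul_subset_right _ _)

theorem exists_eq_Iio_of_pred_mem {S : Set ℤ} (hS : (excess S).HasFiniteSupport)
    (hpred : ∀ i, i + 1 ∈ S → i ∈ S) : ∃ c, S = Set.Iio c := by
  obtain ⟨B, hB⟩ := hS.bddAbove
  obtain ⟨A, hA⟩ := hS.bddBelow
  have hbdd : ∀ i ∈ S, i ≤ max B 0 := by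
    intro i hi
    by_contra! hlt
    have hne : excess S i ≠ 0 := by
      rw [excess, Set.indicator_of_mem hi, Set.indicator_of_notMem (by grind)]
      exact one_ne_zero
    exact (hB hne).not_gt ((le_max_left _ _).trans_lt hlt)
  have hmem : min A 0 - 1 ∈ S := by
    by_contra hn
    have hne : excess S (min A 0 - 1) ≠ 0 := by
      rw [excess, Set.indicator_of_notMem hn, Set.indicator_of_mem (by grind)]
      norm_num
    exact (hA hne).not_gt (by grind)
  obtain ⟨z, hz, hmax⟩ := Int.exists_greatest_of_bdd ⟨_, hbdd⟩ ⟨_, hmem⟩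
  have hanti : Antitone (· ∈ S) := antitone_int_of_succ_le hpred
  refine ⟨z + 1, Set.ext fun i => ?_⟩
  rw [Set.mem_Iio, Int.lt_add_one_iff]
  exact ⟨hmax i, fun hi => hanti hi hz⟩

/-! ### Twisted runners -/

theorem sum_ite_natCast_eq (s : Finset ℕ) (a : ℤ) :
    ∑ x ∈ s, (if (x : ℤ) = a then 1 else 0 : ℤ) = if 0 ≤ a ∧ a.toNat ∈ s then 1 else 0 := by
  by_cases ha : 0 ≤ a
  · lift a to ℕ using ha
    simp
  · rw [if_neg fun h => ha h.1]
    exact Finset.sum_eq_zero fun x _ => if_neg (by lia)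

section TwistedRunner

variable {t r : ℕ}

theorem mem_twistedRunner_of_nonneg {l : BarPartition} {i : ℤ} (hi : 0 ≤ i) :
    i ∈ twistedRunner t r l ↔ (t * i + r).toNat ∈ l.parts := by
  lift i to ℕ using hi
  have hnat : ((t : ℤ) * i + r).toNat = t * i + r := by lia
  simp [twistedRunner, hnat]

theorem mem_twistedRunner_of_neg (hrt : r < t) {l : BarPartition} {i : ℤ} (hi : i < 0) :
    i ∈ twistedRunner t r l ↔ (-(t * i + r)).toNat ∉ l.parts := by
  obtain ⟨j, rfl⟩ : ∃ j : ℕ, i = -(j + 1) := ⟨(-(i + 1)).toNat, by lia⟩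
  have hnat : (-((t : ℤ) * -(j + 1) + r)).toNat = t * j + (t - r) := by
    have : -((t : ℤ) * -(j + 1) + r) = ((t * j + (t - r) : ℕ) : ℤ) := by
      push_cast [hrt.le]
      ring
    rw [this, Int.toNat_natCast]
  have hslot : (-(-((j : ℤ) + 1) + 1)).toNat = j := by lia
  rw [hnat, twistedRunner, Set.mem_ofPred_eq, hslot]
  simp only [hi, hi.not_ge, false_and, true_and, false_or]

theorem excess_twistedRunner (hr : 0 < r) (hrt : r < t) (l : BarPartition) (i : ℤ) :
    excess (twistedRunner t r l) i = ∑ x ∈ l.parts,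
      ((if (x : ℤ) = t * i + r then 1 else 0) - if (x : ℤ) = -(t * i + r) then 1 else 0) := by
  classical
  rw [Finset.sum_sub_distrib, sum_ite_natCast_eq, sum_ite_natCast_eq]
  simp only [excess, Set.indicator_apply, Set.mem_Iio, Pi.one_apply]
  rcases le_or_gt 0 i with hi | hi
  · have hpos : 0 < (t : ℤ) * i + r := by positivity
    simp only [mem_twistedRunner_of_nonneg hi, hi.not_gt, hpos.le, (neg_neg_of_pos hpos).not_ge]
    split_ifs <;> simp_all
  · have hneg : (t : ℤ) * i + r < 0 := by nlinarith
    simp only [mem_twistedRunner_of_neg hrt hi, hi, hneg.not_ge, (neg_pos.2 hneg).le]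
    split_ifs <;> simp_all

theorem injective_mul_add (ht : t ≠ 0) (r : ℕ) :
    Function.Injective fun i : ℤ => (t * i + r : ℤ) := fun i j h => by
  simpa [ht] using h

theorem hasFiniteSupport_excess_twistedRunner (hr : 0 < r) (hrt : r < t) (l : BarPartition) :
    (excess (twistedRunner t r l)).HasFiniteSupport := by
  have hinj := injective_mul_add (hr.trans hrt).ne' r
  refine (((l.parts.finite_toSet.image ((↑) : ℕ → ℤ)).union
    (l.parts.finite_toSet.image fun x : ℕ => -(x : ℤ))).preimage hinj.injOn).subset fun i hi => ?_
  rw [Function.mem_support, excess_twistedRunner hr hrt] at hi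
  obtain ⟨x, hx, hne⟩ := Finset.exists_ne_zero_of_sum_ne_zero hi
  by_cases h : (x : ℤ) = t * i + r
  · exact .inl ⟨x, hx, h⟩
  · exact .inr ⟨x, hx, by grind⟩

theorem finsum_ite_eq_apply {g : ℤ → ℤ} (hg : g.Injective) (a c : ℤ)
    [Decidable (a ∈ Set.range g)] :
    ∑ᶠ i, (if a = g i then c else 0) = if a ∈ Set.range g then c else 0 := by
  split_ifs with h
  · obtain ⟨j, rfl⟩ := h
    rw [finsum_eq_single _ j fun i hi => if_neg (hg.ne hi.symm), if_pos rfl]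
  · exact finsum_eq_zero_of_forall_eq_zero fun i => if_neg fun hi => h ⟨i, hi.symm⟩

theorem mem_range_mul_add_iff (t r : ℕ) (a : ℤ) :
    a ∈ Set.range (fun i : ℤ => (t * i + r : ℤ)) ↔ (a : ZMod t) = r := by
  rw [eq_comm, ← Int.cast_natCast (R := ZMod t) r, ZMod.intCast_eq_intCast_iff_dvd_sub]
  exact exists_congr fun i => by grind

theorem finsum_mul_excess_twistedRunner (hr : 0 < r) (hrt : r < t) (l : BarPartition)
    (f : ℤ → ℤ) :
    ∑ᶠ i : ℤ, f (t * i + r) * excess (twistedRunner t r l) i = ∑ x ∈ l.parts,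
      ((if (x : ZMod t) = r then f x else 0) - if (x : ZMod t) = -r then f (-x) else 0) := by
  classical
  have hinj := injective_mul_add (hr.trans hrt).ne' r
  have hfin (a c : ℤ) : (fun i : ℤ => if a = t * i + r then c else 0).HasFiniteSupport :=
    ((Set.finite_singleton a).preimage hinj.injOn).subset fun i hi => by
      by_contra h
      exact hi (if_neg fun h' => h h'.symm)
  have hterm (i : ℤ) : f (t * i + r) * excess (twistedRunner t r l) i = ∑ x ∈ l.parts,
      ((if (x : ℤ) = t * i + r then f x else 0) - if -(x : ℤ) = t * i + r then f (-x) else 0) := by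
    rw [excess_twistedRunner hr hrt, Finset.mul_sum]
    refine Finset.sum_congr rfl fun x _ => ?_
    simp only [← neg_eq_iff_eq_neg]
    grind
  simp only [hterm]
  rw [finsum_sum_comm]
  swap
  · exact fun x _ => (hfin x (f x)).sub (hfin (-x) (f (-x)))
  refine Finset.sum_congr rfl fun x _ => ?_
  rw [finsum_sub_distrib (hfin _ _) (hfin _ _), finsum_ite_eq_apply hinj,
    finsum_ite_eq_apply hinj]
  simp only [mem_range_mul_add_iff, Int.cast_natCast, Int.cast_neg, neg_eq_iff_eq_neg]

end TwistedRunner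

theorem natAbs_valMinAbs_eq_iff {t r : ℕ} (hrt : 2 * r < t) {a : ZMod t} :
    a.valMinAbs.natAbs = r ↔ a = r ∨ a = -r := by
  have hr : (r : ZMod t).valMinAbs = r := ZMod.valMinAbs_natCast_of_le_half (by lia)
  constructor
  · rintro rfl
    rcases Int.natAbs_eq a.valMinAbs with h | h
    · left
      conv_lhs => rw [← a.coe_valMinAbs, h, Int.cast_natCast]
    · right
      conv_lhs => rw [← a.coe_valMinAbs, h, Int.cast_neg, Int.cast_natCast]
  · rintro (rfl | rfl)
    · rw [hr, Int.natAbs_natCast]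
    · rw [ZMod.natAbs_valMinAbs_neg, hr, Int.natAbs_natCast]

theorem IsBarCore.mem_twistedRunner_of_add_one_mem {t r : ℕ} {κ : BarPartition}
    (hκ : IsBarCore t κ) (hr : 0 < r) (hrt : 2 * r < t) {i : ℤ}
    (hi : i + 1 ∈ twistedRunner t r κ) : i ∈ twistedRunner t r κ := by
  have hrt' : r < t := by lia
  have hstep : (t : ℤ) * (i + 1) + r = t * i + r + t := by ring
  rcases lt_trichotomy (i + 1) 0 with hneg | hzero | hpos
  · have hlt : (t : ℤ) * (i + 1) + r < 0 := by nlinarith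
    rw [mem_twistedRunner_of_neg hrt' hneg] at hi
    rw [mem_twistedRunner_of_neg hrt' (by lia)]
    have hsub : (-(t * (i + 1) + r : ℤ)).toNat = (-(t * i + r : ℤ)).toNat - t := by lia
    exact fun hmem => hi (hsub ▸ hκ.sub_mem hmem (by lia))
  · rw [mem_twistedRunner_of_nonneg hzero.ge, hzero, mul_zero, zero_add, Int.toNat_natCast] at hi
    rw [mem_twistedRunner_of_neg hrt' (by lia)]
    have hsub : (-(t * i + r : ℤ)).toNat = t - r := by
      rw [hzero, mul_zero] at hstep
      lia
    exact fun hmem => hκ.add_ne hi (hsub ▸ hmem) (by lia) (by lia)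
  · have hge : 0 ≤ (t : ℤ) * i := mul_nonneg (by lia) (by lia)
    rw [mem_twistedRunner_of_nonneg hpos.le] at hi
    rw [mem_twistedRunner_of_nonneg (by lia)]
    have hsub : (t * i + r : ℤ).toNat = (t * (i + 1) + r : ℤ).toNat - t := by lia
    exact hsub ▸ hκ.sub_mem hi (by lia)

namespace BarPartition

/-- The excess of the number of parts of `l` congruent to `r` over those congruent to `-r`
modulo `t`: the charge of the twisted runner at `r`. -/
def charge (t r : ℕ) (l : BarPartition) : ℤ :=
  ∑ x ∈ l.parts, ((if (x : ZMod t) = r then 1 else 0) - if (x : ZMod t) = -r then 1 else 0)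

/-- The sum of the parts of `l` on the runners `r` and `-r` of the `t`-bar-abacus, for `2r < t`. -/
def runnerSize (t r : ℕ) (l : BarPartition) : ℕ :=
  ∑ x ∈ l.parts with ((x : ℕ) : ZMod t).valMinAbs.natAbs = r, x

variable {t r : ℕ} {l m κ μ : BarPartition}

theorem charge_eq_of_reflTransGen (h : Relation.ReflTransGen (BarRemoval t) l m) :
    l.charge t r = m.charge t r := by
  refine sum_eq_of_reflTransGen_barRemoval
    (g := fun a : ZMod t => (if a = r then 1 else 0) - if a = -r then 1 else 0) ?_ ?_ h
  · simp [eq_comm (a := (0 : ZMod t))]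
  · intro a
    simp [neg_eq_iff_eq_neg]

theorem runnerSize_eq_sum_sub (hr : 0 < r) (hrt : 2 * r < t) (l : BarPartition) :
    (l.runnerSize t r : ℤ) = ∑ x ∈ l.parts,
      ((if (x : ZMod t) = r then (x : ℤ) else 0) - if (x : ZMod t) = -r then -(x : ℤ) else 0) := by
  have hne : (r : ZMod t) ≠ -r := by
    rw [Ne, eq_neg_iff_add_eq_zero, ← Nat.cast_add, ZMod.natCast_eq_zero_iff, ← two_mul]
    exact fun h => (Nat.le_of_dvd (by positivity) h).not_gt hrt
  rw [runnerSize, Finset.sum_filter, Nat.cast_sum]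
  refine Finset.sum_congr rfl fun x _ => ?_
  simp only [natAbs_valMinAbs_eq_iff hrt]
  grind

theorem charge_of_twistedRunner_eq_image_add {d : ℤ}
    (h : twistedRunner t r m = (· + d) '' twistedRunner t r l) (hr : 0 < r) (hrt : r < t) :
    m.charge t r = l.charge t r + d := by
  have key := finsum_mul_excess_image_add (hasFiniteSupport_excess_twistedRunner hr hrt l)
    (f := fun _ => 1) (F := id) (fun i => by simp) d
  rw [← h, finsum_mul_excess_twistedRunner hr hrt m fun _ => 1,
    finsum_mul_excess_twistedRunner hr hrt l fun _ => 1] at key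
  simpa [charge] using key

theorem two_mul_runnerSize_of_twistedRunner_eq_image_add {d : ℤ}
    (h : twistedRunner t r m = (· + d) '' twistedRunner t r l) (hr : 0 < r) (hrt : 2 * r < t) :
    2 * (m.runnerSize t r : ℤ) =
      2 * l.runnerSize t r + 2 * t * d * l.charge t r + (t * d * (d - 1) + 2 * r * d) := by
  have hrt' : r < t := by lia
  have key := finsum_mul_excess_image_add (hasFiniteSupport_excess_twistedRunner hr hrt' l)
    (f := fun i => 2 * (t * i + r)) (F := fun i => t * i * (i - 1) + 2 * r * i)
    (fun i => by ring) d
  have hadd (i : ℤ) : 2 * (t * (i + d) + r) = 2 * (t * i + r) + 2 * t * d := by ring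
  simp only [hadd] at key
  rw [← h, finsum_mul_excess_twistedRunner hr hrt' m fun a => 2 * a,
    finsum_mul_excess_twistedRunner hr hrt' l fun a => 2 * a + 2 * t * d] at key
  rw [runnerSize_eq_sum_sub hr hrt, runnerSize_eq_sum_sub hr hrt, charge, Finset.mul_sum,
    Finset.mul_sum, Finset.mul_sum, ← Finset.sum_add_distrib]
  convert key using 1
  · exact Finset.sum_congr rfl fun x _ => by grind
  · congr 1
    · exact Finset.sum_congr rfl fun x _ => by grind
    · ring

theorem twistedRunner_empty (t r : ℕ) : twistedRunner t r empty = Set.Iio 0 := by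
  simp [twistedRunner, empty, Set.ext_iff]

theorem exists_twistedRunner_eq_image_add_of_isBarCore (hr : 0 < r) (hrt : 2 * r < t)
    (hκ : IsBarCore t κ) :
    ∃ c, twistedRunner t r κ = (· + c) '' twistedRunner t r empty := by
  obtain ⟨c, hc⟩ := exists_eq_Iio_of_pred_mem
    (hasFiniteSupport_excess_twistedRunner hr (by lia) κ)
    fun _ => hκ.mem_twistedRunner_of_add_one_mem hr hrt
  refine ⟨c, ?_⟩
  rw [hc, twistedRunner_empty, Set.image_add_const_Iio, zero_add]

theorem runnerSize_add (hr : 0 < r) (hrt : 2 * r < t) (hκ : IsBarCoreOf t l κ)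
    (hμ : IsBarCocoreOf t l μ) :
    l.runnerSize t r = κ.runnerSize t r + μ.runnerSize t r := by
  obtain ⟨c, hc⟩ := exists_twistedRunner_eq_image_add_of_isBarCore hr hrt hκ.2
  obtain ⟨d, hd⟩ := hμ.2.2 r hr hrt
  have hrt' : r < t := by lia
  have hchargeEmpty : empty.charge t r = 0 := by simp [charge, empty]
  have hcharge : l.charge t r = c := by
    rw [charge_eq_of_reflTransGen hκ.1, charge_of_twistedRunner_eq_image_add hc hr hrt',
      hchargeEmpty, zero_add]
  have hcd : c + d = 0 := by
    rw [← hcharge, ← charge_of_twistedRunner_eq_image_add hd hr hrt',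
      charge_eq_of_reflTransGen hμ.1, hchargeEmpty]
  have hsizeκ := two_mul_runnerSize_of_twistedRunner_eq_image_add hc hr hrt
  have hsizeμ := two_mul_runnerSize_of_twistedRunner_eq_image_add hd hr hrt
  have hsizeEmpty : empty.runnerSize t r = 0 := by simp [runnerSize, empty]
  rw [hsizeEmpty, hchargeEmpty] at hsizeκ
  rw [hcharge] at hsizeμ
  obtain rfl : d = -c := by linarith
  have htwo : 2 * (l.runnerSize t r : ℤ) = 2 * (κ.runnerSize t r + μ.runnerSize t r) := by
    push_cast at hsizeκ
    linear_combination -hsizeκ - hsizeμ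
  exact_mod_cast mul_left_cancel₀ two_ne_zero htwo

theorem runnerSize_zero (t : ℕ) (l : BarPartition) :
    l.runnerSize t 0 = ∑ x ∈ l.parts with t ∣ x, x := by
  simp only [runnerSize, Int.natAbs_eq_zero, ZMod.valMinAbs_eq_zero, ZMod.natCast_eq_zero_iff]

theorem sum_runnerSize (ht : 0 < t) (l : BarPartition) :
    ∑ r ∈ Finset.range (t / 2 + 1), l.runnerSize t r = l.size := by
  have : NeZero t := ⟨ht.ne'⟩
  exact Finset.sum_fiberwise_of_maps_to
    (fun x _ => Finset.mem_range_succ_iff.2 (ZMod.natAbs_valMinAbs_le _)) _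

theorem filter_dvd_eq_of_isBarCocoreOf (hμ : IsBarCocoreOf t l μ) :
    {x ∈ l.parts | t ∣ x} = {x ∈ μ.parts | t ∣ x} := by
  ext x
  simp only [Finset.mem_filter, and_congr_left_iff]
  rintro ⟨k, rfl⟩
  exact hμ.2.1 k

theorem size_add (ht : Odd t) (hκ : IsBarCoreOf t l κ) (hμ : IsBarCocoreOf t l μ) :
    l.size = κ.size + μ.size := by
  simp only [← sum_runnerSize ht.pos, ← Finset.sum_add_distrib]
  refine Finset.sum_congr rfl fun r hr => ?_
  rcases r.eq_zero_or_pos with rfl | hr0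
  · simp only [runnerSize_zero, hκ.2.filter_dvd_eq_empty, filter_dvd_eq_of_isBarCocoreOf hμ,
      Finset.sum_empty, zero_add]
  · exact runnerSize_add hr0 (by grind) hκ hμ

theorem length_le_size (l : BarPartition) : l.length ≤ l.size := by
  rw [length, size, Finset.card_eq_sum_ones]
  exact Finset.sum_le_sum fun x hx => Nat.pos_of_ne_zero fun h => l.zero_not_mem (h ▸ hx)

/-- The number of parts of `l` whose residue modulo `t` of least absolute value is negative. -/
def numNegResidues (t : ℕ) (l : BarPartition) : ℕ :=
  {x ∈ l.parts | ((x : ℕ) : ZMod t).valMinAbs < 0}.card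

theorem length_sub_two_mul_numNegResidues (t : ℕ) (l : BarPartition) :
    (l.length : ℤ) - 2 * l.numNegResidues t =
      {x ∈ l.parts | t ∣ x}.card + ∑ x ∈ l.parts, (x : ZMod t).valMinAbs.sign := by
  simp only [length, numNegResidues, Finset.card_eq_sum_ones, Finset.sum_filter]
  push_cast
  rw [Finset.mul_sum, ← Finset.sum_sub_distrib, ← Finset.sum_add_distrib]
  refine Finset.sum_congr rfl fun x _ => ?_
  simp only [← ZMod.natCast_eq_zero_iff, ← ZMod.valMinAbs_eq_zero]
  rcases lt_trichotomy (x : ZMod t).valMinAbs 0 with h | h | h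
  · simp [h, h.ne, Int.sign_eq_neg_one_of_neg h]
  · simp [h]
  · simp [h.ne', h.not_gt, Int.sign_eq_one_of_pos h]

theorem sum_sign_valMinAbs_eq_of_reflTransGen (ht : Odd t)
    (h : Relation.ReflTransGen (BarRemoval t) l κ) :
    ∑ x ∈ l.parts, (x : ZMod t).valMinAbs.sign = ∑ x ∈ κ.parts, (x : ZMod t).valMinAbs.sign := by
  have : NeZero t := ⟨ht.pos.ne'⟩
  refine sum_eq_of_reflTransGen_barRemoval (g := fun a : ZMod t => a.valMinAbs.sign) (by simp)
    (fun a => ?_) h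
  have ha : 2 * a.val ≠ t := by grind
  rw [ZMod.valMinAbs_neg_of_ne_half ha, Int.sign_neg, add_neg_cancel]

/-- `|l| - ℓ(l)` plus twice the number of parts of negative residue modulo `t`. It has the parity
of `|l| - ℓ(l)` and, unlike it, is additive along core and cocore. -/
def correctedRank (t : ℕ) (l : BarPartition) : ℕ :=
  l.size - l.length + 2 * l.numNegResidues t

theorem correctedRank_add (ht : Odd t) (hκ : IsBarCoreOf t l κ) (hμ : IsBarCocoreOf t l μ) :
    l.correctedRank t = κ.correctedRank t + μ.correctedRank t := by
  have hrank (m : BarPartition) : (m.correctedRank t : ℤ) =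
      m.size - {x ∈ m.parts | t ∣ x}.card - ∑ x ∈ m.parts, (x : ZMod t).valMinAbs.sign := by
    rw [correctedRank, Nat.cast_add, Nat.cast_sub m.length_le_size, Nat.cast_mul, Nat.cast_two]
    linarith [m.length_sub_two_mul_numNegResidues t]
  zify
  rw [hrank, hrank, hrank, sum_sign_valMinAbs_eq_of_reflTransGen ht hκ.1,
    sum_sign_valMinAbs_eq_of_reflTransGen ht hμ.1, filter_dvd_eq_of_isBarCocoreOf hμ,
    hκ.2.filter_dvd_eq_empty, size_add ht hκ hμ]
  simp only [empty, Finset.sum_empty, Finset.card_empty, Nat.cast_add, Nat.cast_zero]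
  ring

theorem even_correctedRank_of_sgn_eq_one (h : l.sgn = 1) : Even (l.correctedRank t) :=
  ((neg_one_pow_eq_one_iff_even (by decide)).1 h).add (even_two_mul _)

end BarPartition

/-! ### Discriminants -/

/-- The factor `2·(-1)^((n+1)/2)` (`n` odd) or `(-1)^(n/2)` (`n` even) by which the product of the
parts of `l` is multiplied in `D_l`, where `n = |l| - ℓ(l)`. -/
def discFactor (n : ℕ) : ℤ :=
  if n % 2 = 1 then 2 * (-1) ^ ((n + 1) / 2) else (-1) ^ (n / 2)

theorem barDisc_eq_discFactor_mul (l : BarPartition) :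
    barDisc l = discFactor (l.size - l.length) * ∏ x ∈ l.parts, (x : ℤ) := by
  rw [barDisc, discFactor, ite_mul]

theorem discFactor_two_mul (n : ℕ) : discFactor (2 * n) = (-1) ^ n := by
  rw [discFactor, if_neg (by lia), Nat.mul_div_cancel_left n two_pos]

theorem discFactor_add_of_even {m : ℕ} (n : ℕ) (hm : Even m) :
    discFactor (m + n) = discFactor m * discFactor n := by
  obtain ⟨k, rfl⟩ := hm
  have hdiv : (2 * k + n) / 2 = k + n / 2 := by lia
  have hdiv' : (2 * k + n + 1) / 2 = k + (n + 1) / 2 := by lia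
  rw [← two_mul, discFactor_two_mul, discFactor, discFactor, hdiv, hdiv', Nat.mul_add_mod]
  split_ifs <;> ring

theorem isCoprime_discFactor {t : ℕ} (ht : Odd t) (n : ℕ) : IsCoprime (discFactor n) t := by
  have htwo : IsCoprime (2 : ℤ) t := by
    exact_mod_cast Nat.isCoprime_iff_coprime.2 ht.coprime_two_left
  have hneg : IsCoprime (-1 : ℤ) t := isCoprime_one_left.neg_left
  rw [discFactor]
  split_ifs
  · exact htwo.mul_left hneg.pow_left
  · exact hneg.pow_left

theorem jacobiSym_prod_left {ι : Type*} (s : Finset ι) (f : ι → ℤ) (b : ℕ) :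
    J(∏ i ∈ s, f i | b) = ∏ i ∈ s, J(f i | b) :=
  map_prod (⟨⟨(J(· | b)), jacobiSym.one_left b⟩, fun a₁ a₂ => jacobiSym.mul_left a₁ a₂ b⟩ : ℤ →* ℤ)
    f s

/-- The function `a ↦ J(|a| | t)` on residues `a` modulo `t`, where `|a|` is the least absolute
value of a representative, modified to take the value `1` at `0`. -/
def foldedSymbol (t : ℕ) (a : ZMod t) : ℤ :=
  if a = 0 then 1 else J(a.valMinAbs.natAbs | t)

theorem foldedSymbol_mul_neg {p : ℕ} (hp : p.Prime) (a : ZMod p) :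
    foldedSymbol p a * foldedSymbol p (-a) = 1 := by
  have : NeZero p := ⟨hp.ne_zero⟩
  simp only [foldedSymbol, neg_eq_zero, ZMod.natAbs_valMinAbs_neg]
  split_ifs with ha
  · rfl
  · rw [← sq]
    refine jacobiSym.sq_one (Nat.coprime_comm.1 (hp.coprime_iff_not_dvd.2 fun hdvd => ha ?_))
    rw [← a.coe_valMinAbs, ZMod.intCast_zmod_eq_zero_iff_dvd]
    exact Int.natCast_dvd.2 hdvd

theorem ite_jacobiSym_natCast_eq_mul_foldedSymbol (t x : ℕ) :
    (if ¬ t ∣ x then J(x | t) else 1) =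
      (if (x : ZMod t).valMinAbs < 0 then J(-1 | t) else 1) * foldedSymbol t x := by
  by_cases hx : (x : ZMod t) = 0
  · simp [foldedSymbol, hx, (ZMod.natCast_eq_zero_iff x t).1 hx]
  have hmod : J(x | t) = J((x : ZMod t).valMinAbs | t) := by
    refine jacobiSym.mod_left' ((ZMod.intCast_eq_intCast_iff' _ _ _).1 ?_)
    rw [ZMod.coe_valMinAbs, Int.cast_natCast]
  rw [if_pos (mt (ZMod.natCast_eq_zero_iff x t).2 hx), hmod, foldedSymbol, if_neg hx]
  split_ifs with hneg
  · rw [← jacobiSym.mul_left, neg_one_mul, Int.ofNat_natAbs_of_nonpos hneg.le, neg_neg]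
  · rw [one_mul, Int.natAbs_of_nonneg (not_lt.1 hneg)]

/-- The discriminant `D_l` with the parts divisible by `t` left out of the product. -/
def reducedDisc (t : ℕ) (l : BarPartition) : ℤ :=
  discFactor (l.size - l.length) * ∏ x ∈ l.parts with ¬ t ∣ x, (x : ℤ)

theorem reducedDisc_mul_prod (t : ℕ) (l : BarPartition) :
    reducedDisc t l * ∏ x ∈ l.parts with t ∣ x, (x : ℤ) = barDisc l := by
  rw [reducedDisc, barDisc_eq_discFactor_mul, mul_assoc, mul_comm (∏ x ∈ _ with ¬ _, _),
    Finset.prod_filter_mul_prod_filter_not]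

theorem barDisc_ne_zero (l : BarPartition) : barDisc l ≠ 0 := by
  rw [barDisc_eq_discFactor_mul, discFactor]
  refine mul_ne_zero (by split_ifs <;> simp) (Finset.prod_ne_zero_iff.2 fun x hx h => ?_)
  exact l.zero_not_mem (Nat.cast_eq_zero.1 h ▸ hx)

theorem reducedDisc_ne_zero (t : ℕ) (l : BarPartition) : reducedDisc t l ≠ 0 :=
  left_ne_zero_of_mul ((reducedDisc_mul_prod t l).symm ▸ barDisc_ne_zero l)

theorem jacobiSym_reducedDisc (t : ℕ) (l : BarPartition) :
    J(reducedDisc t l | t) =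
      J(discFactor (l.correctedRank t) | t) * ∏ x ∈ l.parts, foldedSymbol t x := by
  have hprod : J(∏ x ∈ l.parts with ¬ t ∣ x, (x : ℤ) | t) =
      J(-1 | t) ^ l.numNegResidues t * ∏ x ∈ l.parts, foldedSymbol t x := by
    rw [jacobiSym_prod_left, Finset.prod_filter, BarPartition.numNegResidues,
      ← Finset.prod_const, Finset.prod_filter, ← Finset.prod_mul_distrib]
    exact Finset.prod_congr rfl fun x _ => ite_jacobiSym_natCast_eq_mul_foldedSymbol t x
  rw [reducedDisc, jacobiSym.mul_left, hprod, BarPartition.correctedRank, add_comm,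
    discFactor_add_of_even _ (even_two_mul _), discFactor_two_mul, jacobiSym.mul_left,
    jacobiSym.pow_left]
  ring

theorem barDisc_mul_reducedDisc_mul_reducedDisc {t : ℕ} {l κ μ : BarPartition}
    (hκ : IsBarCore t κ) (hμ : IsBarCocoreOf t l μ) :
    barDisc l * (reducedDisc t κ * reducedDisc t μ) =
      reducedDisc t l * (barDisc κ * barDisc μ) := by
  simp only [← reducedDisc_mul_prod t, hκ.filter_dvd_eq_empty,
    BarPartition.filter_dvd_eq_of_isBarCocoreOf hμ, Finset.prod_empty]
  ring

section Prime

variable {p : ℕ} {l κ μ : BarPartition}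

theorem isCoprime_reducedDisc (hp : p.Prime) (hodd : Odd p) (l : BarPartition) :
    IsCoprime (reducedDisc p l) p := by
  refine (isCoprime_discFactor hodd _).mul_left
    (IsCoprime.prod_left fun x hx => Nat.isCoprime_iff_coprime.2 ?_)
  exact (hp.coprime_iff_not_dvd.2 (Finset.mem_filter.1 hx).2).symm

theorem jacobiSym_reducedDisc_mul (hp : p.Prime) (hodd : Odd p) (hκ : IsBarCoreOf p l κ)
    (hμ : IsBarCocoreOf p l μ) (hsgn : κ.sgn = 1 ∨ μ.sgn = 1) :
    J(reducedDisc p l | p) = J(reducedDisc p κ * reducedDisc p μ | p) := by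
  have hinv {m n : BarPartition} (h : Relation.ReflTransGen (BarRemoval p) m n) :
      ∏ x ∈ m.parts, foldedSymbol p x = ∏ x ∈ n.parts, foldedSymbol p x :=
    prod_eq_of_reflTransGen_barRemoval (g := foldedSymbol p) (if_pos rfl)
      (foldedSymbol_mul_neg hp) h
  have hfactor : discFactor (l.correctedRank p) =
      discFactor (κ.correctedRank p) * discFactor (μ.correctedRank p) := by
    rw [BarPartition.correctedRank_add hodd hκ hμ]
    rcases hsgn with h | h
    · exact discFactor_add_of_even _ (BarPartition.even_correctedRank_of_sgn_eq_one h)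
    · rw [add_comm, mul_comm]
      exact discFactor_add_of_even _ (BarPartition.even_correctedRank_of_sgn_eq_one h)
  rw [jacobiSym.mul_left, jacobiSym_reducedDisc, jacobiSym_reducedDisc p κ,
    jacobiSym_reducedDisc p μ, hfactor, jacobiSym.mul_left, hinv hκ.1, hinv hμ.1,
    BarPartition.empty, Finset.prod_empty]
  ring

theorem tau_barLittlewood_of_sgn_pos_general {K F : Type*} [Field K] [IsAlgClosed K] [CharZero K]
    [FunLike F K K] [RingHomClass F K K] {σ : F} (hp : p.Prime) (hodd : Odd p)
    (hκ : IsBarCoreOf p l κ) (hμ : IsBarCocoreOf p l μ) (hσ : ActsAsFrobenius p σ)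
    {τl τκ τμ : ℤ} (hτl : ScalesSqrt σ (barDisc l) τl) (hτκ : ScalesSqrt σ (barDisc κ) τκ)
    (hτμ : ScalesSqrt σ (barDisc μ) τμ) (hsgn : κ.sgn = 1 ∨ μ.sgn = 1) :
    τl = τκ * τμ := by
  set E := reducedDisc p κ * reducedDisc p μ
  have hE : IsCoprime E p :=
    (isCoprime_reducedDisc hp hodd κ).mul_left (isCoprime_reducedDisc hp hodd μ)
  have hl : ScalesSqrt σ (barDisc l * E) (τl * J(E | p)) :=
    hτl.mul (hσ.scalesSqrt_of_isCoprime hodd hE)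
  have hκμ : ScalesSqrt σ (barDisc l * E) (J(E | p) * (τκ * τμ)) := by
    rw [barDisc_mul_reducedDisc_mul_reducedDisc hκ.2 hμ,
      ← jacobiSym_reducedDisc_mul hp hodd hκ hμ hsgn]
    exact (hσ.scalesSqrt_of_isCoprime hodd (isCoprime_reducedDisc hp hodd l)).mul (hτκ.mul hτμ)
  have hne : barDisc l * E ≠ 0 := mul_ne_zero (barDisc_ne_zero l)
    (mul_ne_zero (reducedDisc_ne_zero p κ) (reducedDisc_ne_zero p μ))
  exact mul_left_cancel₀ (jacobiSym.ne_zero (Int.isCoprime_iff_gcd_eq_one.1 hE))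
    ((mul_comm _ _).trans (hl.unique hne hκμ))

end Prime

/-- Let `p` be an odd prime, `λ` a bar-partition with `p`-bar core `κ` and
`p`-bar cocore `μ`, and `σ` a `σ_p`-type automorphism of `ℚ̄`. If `sgn(κ) = 1` or
`sgn(μ) = 1`, then `τ(λ,σ) = τ(κ,σ)·τ(μ,σ)`. -/
theorem tau_barLittlewood_of_sgn_pos (p : ℕ) (hp : p.Prime) (hpodd : Odd p)
    (l κ μ : BarPartition) (hκ : IsBarCoreOf p l κ) (hμ : IsBarCocoreOf p l μ)
    (σ : Qbar ≃ₐ[ℚ] Qbar) (hσ : IsSigmaPType p σ)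
    (τl τκ τμ : ℤ)
    (hτl : ∀ α : Qbar, α ^ 2 = (barDisc l : Qbar) → σ α = (τl : Qbar) * α)
    (hτκ : ∀ α : Qbar, α ^ 2 = (barDisc κ : Qbar) → σ α = (τκ : Qbar) * α)
    (hτμ : ∀ α : Qbar, α ^ 2 = (barDisc μ : Qbar) → σ α = (τμ : Qbar) * α)
    (hsgn : κ.sgn = 1 ∨ μ.sgn = 1) :
    τl = τκ * τμ :=
  tau_barLittlewood_of_sgn_pos_general hp hpodd hκ hμ hσ.1 hτl hτκ hτμ hsgn
end

section
/- Let p be an odd prime, let m be a positive integer not divisible by p, and let σ be an automorphism of ℚ̄ over ℚ such that σ(ζ) = ζ^p for every root of unity ζ whose order is coprime to p. Then for every α ∈ ℚ̄ with α² = m one has σ(α) = (m/p)·α, where (m/p) denotes the Jacobi symbol. -/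
/-!
The integers having a square root `β` with `σ β = (m/p) β` are closed under multiplication, so it
is enough to find such a `β` for `-1`, for `2` and for `q* = (-1)^((q-1)/2) q`, `q` an odd prime.
All three have square roots that are explicit sums of roots of unity of order prime to `p`: a fourth
root of unity `i`, the sum `ζ + ζ⁻¹` for a primitive eighth root of unity `ζ`, and the quadratic
Gauss sum modulo `q`. Replacing each root of unity by its `p`-th power multiplies them by `χ₄(p)`,
`χ₈(p)` and `(p/q)`, which are `(-1/p)`, `(2/p)` and, by quadratic reciprocity, `(q*/p)`.
-/

open ZMod
open scoped NumberTheorySymbols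

section RootsOfUnity

variable {R : Type*} [CommRing R]

lemma pow_eq_χ₄_mul_of_sq_eq_neg_one {i : R} (hi : i ^ 2 = -1) {n : ℕ} (hn : Odd n) :
    i ^ n = (χ₄ n : R) * i := by
  obtain ⟨k, rfl⟩ := hn
  rw [χ₄_eq_neg_one_pow (by lia), show (2 * k + 1) / 2 = k by lia, pow_succ, pow_mul, hi]
  norm_cast

lemma pow_sub_pow_three_eq_χ₈_mul_of_pow_four_eq_neg_one {ζ : R} (hζ : ζ ^ 4 = -1) {n : ℕ}
    (hn : Odd n) : ζ ^ n - (ζ ^ n) ^ 3 = (χ₈ n : R) * (ζ - ζ ^ 3) := by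
  have hζ8 : ζ ^ 8 = 1 := by linear_combination (ζ ^ 4 - 1) * hζ
  have hn8 : n % 8 = 1 ∨ n % 8 = 3 ∨ n % 8 = 5 ∨ n % 8 = 7 := by
    have := Nat.odd_iff.mp hn
    lia
  rw [pow_eq_pow_mod n hζ8, χ₈_nat_mod_eight]
  rcases hn8 with h | h | h | h <;> rw [h]
  · rw [show χ₈ (1 : ℕ) = 1 by decide]
    simp
  · rw [show χ₈ (3 : ℕ) = -1 by decide]
    push_cast
    linear_combination -ζ * hζ8
  · rw [show χ₈ (5 : ℕ) = -1 by decide]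
    push_cast
    linear_combination ζ * hζ - ζ ^ 7 * hζ8 - ζ ^ 3 * hζ
  · rw [show χ₈ (7 : ℕ) = 1 by decide]
    push_cast
    linear_combination (ζ ^ 3 - ζ ^ 17) * hζ + (ζ ^ 9 + ζ) * hζ8

end RootsOfUnity

section GaussSum

variable {R R' : Type*} [CommRing R] [Fintype R] [CommRing R']

lemma map_gaussSum_of_isQuadratic (σ : R' →+* R') {χ : MulChar R R'} (hχ : χ.IsQuadratic)
    {ψ : AddChar R R'} {n : ℕ} (hn : IsUnit (n : R)) (hψ : ∀ a, σ (ψ a) = ψ a ^ n) :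
    σ (gaussSum χ ψ) = χ n * gaussSum χ ψ := by
  have hσχ (a : R) : σ (χ a) = χ a := by rcases hχ a with h | h | h <;> simp [h]
  calc σ (gaussSum χ ψ) = gaussSum χ (ψ.mulShift n) := by
        simp only [gaussSum, map_sum, map_mul, hσχ, hψ, AddChar.mulShift_spec']
    _ = χ n * gaussSum χ ψ := by
        simpa only [hχ.inv, hn.unit_spec] using gaussSum_mulShift_eq χ ψ hn.unit

lemma quadraticChar_ringHomComp_ne_one {F : Type*} [Field F] [Fintype F] [DecidableEq F]
    (hF : ringChar F ≠ 2) [Nontrivial R'] (hR' : ringChar R' ≠ 2) :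
    (quadraticChar F).ringHomComp (Int.castRingHom R') ≠ 1 := by
  obtain ⟨a, ha⟩ := quadraticChar_exists_neg_one' hF
  refine MulChar.ne_one_iff.mpr ⟨a, ?_⟩
  simpa [ha] using Ring.neg_one_ne_one_of_char_ne_two hR'

end GaussSum

lemma jacobiSym_χ₄_mul {a b : ℕ} (ha : Odd a) (hb : Odd b) : J(χ₄ a * a | b) = J(b | a) := by
  rw [jacobiSym.mul_left, jacobiSym.quadratic_reciprocity' ha hb, qrSign.symm hb ha, ← mul_assoc,
    ← qrSign, ← sq, qrSign.sq_eq_one ha hb, one_mul]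

/-- The ring `R` contains a square root `β` of the integer `m` on which `σ` acts as multiplication
by the Jacobi symbol `(m/p)`. In a domain the other square root `-β` then has the same property, and
asking for one root only makes the notion visibly multiplicative in `m`. -/
def HasJacobiSqrt {R : Type*} [CommRing R] (σ : R →+* R) (p : ℕ) (m : ℤ) : Prop :=
  ∃ β : R, β ^ 2 = m ∧ σ β = J(m | p) * β

namespace HasJacobiSqrt

variable {R : Type*} [CommRing R] {σ : R →+* R} {p : ℕ}

lemma map_eq [IsDomain R] {m : ℤ} (h : HasJacobiSqrt σ p m) {α : R} (hα : α ^ 2 = m) :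
    σ α = J(m | p) * α := by
  obtain ⟨β, hβ, hσβ⟩ := h
  rcases sq_eq_sq_iff_eq_or_eq_neg.mp (hα.trans hβ.symm) with rfl | rfl
  · exact hσβ
  · rw [map_neg, hσβ, mul_neg]

lemma mul {a b : ℤ} (ha : HasJacobiSqrt σ p a) (hb : HasJacobiSqrt σ p b) :
    HasJacobiSqrt σ p (a * b) := by
  obtain ⟨x, hx, hσx⟩ := ha
  obtain ⟨y, hy, hσy⟩ := hb
  refine ⟨x * y, by rw [mul_pow, hx, hy, Int.cast_mul], ?_⟩
  rw [map_mul, hσx, hσy, jacobiSym.mul_left, Int.cast_mul, mul_mul_mul_comm]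

lemma one : HasJacobiSqrt σ p 1 := ⟨1, by simp, by simp [jacobiSym.one_left]⟩

lemma of_intCast_eq_zero {m : ℤ} (hm : (m : R) = 0) : HasJacobiSqrt σ p m :=
  ⟨0, by simp [hm], by simp⟩

lemma of_charP_two [CharP R 2] {m : ℤ} (hmp : IsCoprime m p) : HasJacobiSqrt σ p m := by
  rcases Int.even_or_odd m with hm | hm
  · exact of_intCast_eq_zero ((CharP.intCast_eq_zero_iff R 2 m).mpr (mod_cast hm.two_dvd))
  · have hJ : (J(m | p) : R) = 1 := by
      rcases jacobiSym.eq_one_or_neg_one (Int.isCoprime_iff_gcd_eq_one.mp hmp) with h | h <;>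
        simp [h, CharTwo.neg_eq]
    obtain ⟨k, rfl⟩ := hm
    exact ⟨1, by simp [CharTwo.two_eq_zero], by simp [hJ]⟩

lemma neg_one (hp : Odd p) {i : R} (hi : i ^ 2 = -1) (hσi : σ i = i ^ p) :
    HasJacobiSqrt σ p (-1) :=
  ⟨i, by simpa using hi, by
    rw [hσi, jacobiSym.at_neg_one hp, pow_eq_χ₄_mul_of_sq_eq_neg_one hi hp]⟩

-- As `ζ⁻¹ = -ζ ^ 3`, the square root of `2` used here is `ζ + ζ⁻¹`.
lemma two (hp : Odd p) {ζ : R} (hζ : ζ ^ 4 = -1) (hσζ : σ ζ = ζ ^ p) : HasJacobiSqrt σ p 2 :=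
  ⟨ζ - ζ ^ 3, by push_cast; linear_combination (ζ ^ 2 - 2) * hζ, by
    rw [map_sub, map_pow, hσζ, jacobiSym.at_two hp,
      pow_sub_pow_three_eq_χ₈_mul_of_pow_four_eq_neg_one hζ hp]⟩

lemma χ₄_mul_prime [IsDomain R] (hR : ringChar R ≠ 2) (hp : Odd p) {q : ℕ} (hq : q.Prime)
    (hq2 : q ≠ 2) (hqp : q.Coprime p) {ζ : R} (hζ : IsPrimitiveRoot ζ q) (hσζ : σ ζ = ζ ^ p) :
    HasJacobiSqrt σ p (χ₄ q * q) := by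
  have : Fact q.Prime := ⟨hq⟩
  have hF : ringChar (ZMod q) ≠ 2 := by rwa [ringChar_zmod_n]
  let χ : MulChar (ZMod q) R := (quadraticChar (ZMod q)).ringHomComp (Int.castRingHom R)
  let ψ : AddChar (ZMod q) R := AddChar.zmodChar q hζ.pow_eq_one
  have hχ : χ.IsQuadratic := (quadraticChar_isQuadratic _).comp _
  have hσψ (a : ZMod q) : σ (ψ a) = ψ a ^ p := by
    simp only [ψ, AddChar.zmodChar_apply, map_pow, hσζ, pow_right_comm]
  have hJ : (J(χ₄ q * q | p) : R) = χ p := by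
    rw [jacobiSym_χ₄_mul (hq.odd_of_ne_two hq2) hp, ← jacobiSym.legendreSym.to_jacobiSym]
    simp [χ, legendreSym]
  refine ⟨gaussSum χ ψ, ?_, ?_⟩
  · rw [gaussSum_sq (quadraticChar_ringHomComp_ne_one hF hR) hχ
      (AddChar.zmodChar_primitive_of_primitive_root q hζ), MulChar.ringHomComp_apply,
      quadraticChar_neg_one hF, ZMod.card]
    simp
  · rw [hJ, map_gaussSum_of_isQuadratic σ hχ ((isUnit_iff_coprime p q).mpr hqp.symm) hσψ]

end HasJacobiSqrt

/-- The ring endomorphism `σ` raises every root of unity of order prime to `p` to its `p`-th power,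
as a Frobenius element at `p` does. The order `n` enters only through `ζ ^ n = 1`: the root need
not be primitive. -/
def IsFrobeniusOnRootsOfUnity {R : Type*} [CommRing R] (σ : R →+* R) (p : ℕ) : Prop :=
  ∀ (ζ : R) (n : ℕ), 0 < n → n.Coprime p → ζ ^ n = 1 → σ ζ = ζ ^ p

namespace IsFrobeniusOnRootsOfUnity

variable {K : Type*} [Field K] [IsAlgClosed K] {σ : K →+* K} {p : ℕ}

lemma hasJacobiSqrt_neg_one (hσ : IsFrobeniusOnRootsOfUnity σ p) (hp : Odd p) :
    HasJacobiSqrt σ p (-1) := by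
  obtain ⟨i, hi⟩ := IsAlgClosed.exists_pow_nat_eq (-1 : K) two_pos
  have hi4 : i ^ 2 ^ 2 = 1 := by linear_combination (i ^ 2 - 1) * hi
  exact .neg_one hp hi (hσ i _ (by positivity) (hp.coprime_two_left.pow_left 2) hi4)

lemma hasJacobiSqrt_two (hσ : IsFrobeniusOnRootsOfUnity σ p) (hp : Odd p) :
    HasJacobiSqrt σ p 2 := by
  obtain ⟨ζ, hζ⟩ := IsAlgClosed.exists_pow_nat_eq (-1 : K) four_pos
  have hζ8 : ζ ^ 2 ^ 3 = 1 := by linear_combination (ζ ^ 4 - 1) * hζ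
  exact .two hp hζ (hσ ζ _ (by positivity) (hp.coprime_two_left.pow_left 3) hζ8)

lemma hasJacobiSqrt_prime (hσ : IsFrobeniusOnRootsOfUnity σ p) (hp : Odd p) {q : ℕ}
    (hq : q.Prime) (hqp : q.Coprime p) : HasJacobiSqrt σ p q := by
  rcases eq_or_ne q 2 with rfl | hq2
  · exact hσ.hasJacobiSqrt_two hp
  by_cases hqK : (q : K) = 0
  · exact .of_intCast_eq_zero (mod_cast hqK)
  -- The quadratic character modulo `q` is trivial in characteristic two, so Gauss sums are no help.
  by_cases hK : ringChar K = 2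
  · have : CharP K 2 := ringChar.of_eq hK
    exact .of_charP_two (Nat.isCoprime_iff_coprime.mpr hqp)
  have : NeZero (q : K) := ⟨hqK⟩
  obtain ⟨ζ, hζ⟩ := HasEnoughRootsOfUnity.exists_primitiveRoot K q
  have hstar : HasJacobiSqrt σ p (χ₄ q * q) :=
    .χ₄_mul_prime hK hp hq hq2 hqp hζ (hσ ζ q hq.pos hqp hζ.pow_eq_one)
  rcases Nat.odd_mod_four_iff.mp (hq.eq_two_or_odd.resolve_left hq2) with h | h
  · simpa [χ₄_nat_one_mod_four h] using hstar
  · simpa [χ₄_nat_three_mod_four h] using (hσ.hasJacobiSqrt_neg_one hp).mul hstar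

lemma hasJacobiSqrt_natCast (hσ : IsFrobeniusOnRootsOfUnity σ p) (hp : Odd p) {m : ℕ}
    (hmp : m.Coprime p) : HasJacobiSqrt σ p m := by
  induction m using induction_on_primes with
  | zero => exact .of_intCast_eq_zero (by simp)
  | one => exact .one
  | prime_mul q a hq ih =>
    rw [Nat.cast_mul]
    exact (hσ.hasJacobiSqrt_prime hp hq hmp.coprime_mul_right).mul (ih hmp.coprime_mul_left)

lemma hasJacobiSqrt (hσ : IsFrobeniusOnRootsOfUnity σ p) (hp : Odd p) {m : ℤ}
    (hmp : IsCoprime m p) : HasJacobiSqrt σ p m := by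
  obtain ⟨n, rfl | rfl⟩ := m.eq_nat_or_neg
  · exact hσ.hasJacobiSqrt_natCast hp (Nat.isCoprime_iff_coprime.mp hmp)
  · have hnp : n.Coprime p :=
      Nat.isCoprime_iff_coprime.mp ((IsCoprime.neg_left_iff _ _).mp hmp)
    rw [neg_eq_neg_one_mul]
    exact (hσ.hasJacobiSqrt_neg_one hp).mul (hσ.hasJacobiSqrt_natCast hp hnp)

end IsFrobeniusOnRootsOfUnity

theorem sigmaP_sqrt_eq_jacobiSym_smul_general {K : Type*} [Field K] [IsAlgClosed K]
    {σ : K →+* K} {p : ℕ} (hp : Odd p) (hσ : IsFrobeniusOnRootsOfUnity σ p) {m : ℤ}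
    (hmp : IsCoprime m p) {α : K} (hα : α ^ 2 = m) : σ α = J(m | p) * α :=
  (hσ.hasJacobiSqrt hp hmp).map_eq hα

/-- Let `p` be an odd prime, `m` a positive integer not divisible by `p`,
and `σ` an automorphism of `ℚ̄` over `ℚ` with `σ(ζ) = ζ^p` for every root of unity `ζ` of
order coprime to `p`. Then for every `α ∈ ℚ̄` with `α² = m` one has `σ(α) = (m/p)·α`, where
`(m/p)` is the Jacobi symbol. -/
theorem sigmaP_sqrt_eq_jacobiSym_smul (p : ℕ) (hp : p.Prime) (hpodd : Odd p)
    (m : ℕ) (hm : 0 < m) (hpm : ¬ p ∣ m)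
    (σ : Qbar ≃ₐ[ℚ] Qbar)
    (hσ : ∀ (ζ : Qbar) (n : ℕ), 0 < n → Nat.Coprime n p → ζ ^ n = 1 → σ ζ = ζ ^ p)
    (α : Qbar) (hα : α ^ 2 = (m : Qbar)) :
    σ α = (jacobiSym (m : ℤ) p : Qbar) * α :=
  sigmaP_sqrt_eq_jacobiSym_smul_general (σ := (σ : Qbar →+* Qbar)) hpodd hσ
    (Nat.isCoprime_iff_coprime.mpr (hp.coprime_iff_not_dvd.mpr hpm).symm) (mod_cast hα)
end

section
/- Let t ≥ 3 be an odd integer. For every bar-partition λ, the integer ℓ(λ) − ℓ(λ_(t̄)) − ℓ(λ^[t̄]) is even, where λ_(t̄) is the t-bar core and λ^[t̄] the t-bar cocore of λ. -/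
open scoped BigOperators

/-! Runner `0` of the `t`-bar-abacus carries the parts divisible by `t`. A `t`-bar removal changes
the number of beads off runner `0` by `0` or `-2`, and runner `0` of a `t`-bar core is empty, so
`ℓ(λ)` is congruent modulo `2` to the length of the core of `λ` plus the number of beads on
runner `0`. The cocore has the same runner `0` as `λ` and an empty core, so its length has the
parity of that last number. -/

namespace BarPartition

/-- Runner `0` of the `t`-bar-abacus, encoded as the set of the parts that lie on it (the parts
`t * k`, rather than the slots `k`). -/
def runnerZero (t : ℕ) (l : BarPartition) : Finset ℕ := {a ∈ l.parts | t ∣ a}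

/-- The parts lying on the runners of the `t`-bar-abacus other than runner `0`; the parity of their
number is invariant under `t`-bar removals. -/
def offRunnerZero (t : ℕ) (l : BarPartition) : Finset ℕ := {a ∈ l.parts | ¬ t ∣ a}

variable {t : ℕ}

theorem mem_offRunnerZero {l : BarPartition} {a : ℕ} :
    a ∈ l.offRunnerZero t ↔ a ∈ l.parts ∧ ¬ t ∣ a :=
  Finset.mem_filter

theorem card_runnerZero_add_card_offRunnerZero (t : ℕ) (l : BarPartition) :
    (l.runnerZero t).card + (l.offRunnerZero t).card = l.length :=
  Finset.card_filter_add_card_filter_not _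

theorem runnerZero_congr {l m : BarPartition} (h : ∀ k, t * k ∈ l.parts ↔ t * k ∈ m.parts) :
    l.runnerZero t = m.runnerZero t := by
  ext a
  simp only [runnerZero, Finset.mem_filter]
  exact and_congr_left fun ⟨k, hk⟩ => hk ▸ h k

theorem not_dvd_of_mem_of_lt {l : BarPartition} {a : ℕ} (ha : a ∈ l.parts) (hat : a < t) :
    ¬ t ∣ a :=
  Nat.not_dvd_of_pos_of_lt (Nat.pos_of_ne_zero (ne_of_mem_of_not_mem ha l.zero_not_mem)) hat

theorem card_offRunnerZero_of_replace {l m : BarPartition} {a : ℕ} (ha : a ∈ l.parts) (hta : t ≤ a)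
    (hsub : a - t ∉ l.parts) (hm : m.parts = insert (a - t) (l.parts.erase a)) :
    (m.offRunnerZero t).card = (l.offRunnerZero t).card := by
  have hdvd : t ∣ a - t ↔ t ∣ a := Nat.dvd_sub_iff_left hta dvd_rfl
  rw [offRunnerZero, hm, Finset.filter_insert, Finset.filter_erase, ← offRunnerZero]
  by_cases h : t ∣ a
  · have ha' : a ∉ l.offRunnerZero t := fun h' => (mem_offRunnerZero.1 h').2 h
    rw [if_neg (not_not.2 (hdvd.2 h)), Finset.erase_eq_of_notMem ha']
  · have ha' : a ∈ l.offRunnerZero t := mem_offRunnerZero.2 ⟨ha, h⟩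
    have hsub' : a - t ∉ (l.offRunnerZero t).erase a := fun h' =>
      hsub (mem_offRunnerZero.1 (Finset.mem_of_mem_erase h')).1
    rw [if_pos (hdvd.not.2 h), Finset.card_insert_of_notMem hsub', Finset.card_erase_add_one ha']

theorem offRunnerZero_of_erase_self {l m : BarPartition} (hm : m.parts = l.parts.erase t) :
    m.offRunnerZero t = l.offRunnerZero t := by
  rw [offRunnerZero, hm, Finset.filter_erase, ← offRunnerZero, Finset.erase_eq_of_notMem]
  exact fun h => (mem_offRunnerZero.1 h).2 dvd_rfl

theorem card_offRunnerZero_of_erase_pair {l m : BarPartition} {a b : ℕ} (ha : a ∈ l.parts)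
    (hb : b ∈ l.parts) (hab : a ≠ b) (hsum : a + b = t) (hm : m.parts = (l.parts.erase a).erase b) :
    (m.offRunnerZero t).card + 2 = (l.offRunnerZero t).card := by
  have ha₀ : a ≠ 0 := ne_of_mem_of_not_mem ha l.zero_not_mem
  have hb₀ : b ≠ 0 := ne_of_mem_of_not_mem hb l.zero_not_mem
  have ha' : a ∈ l.offRunnerZero t :=
    mem_offRunnerZero.2 ⟨ha, not_dvd_of_mem_of_lt ha (by omega)⟩
  have hb' : b ∈ (l.offRunnerZero t).erase a :=
    Finset.mem_erase.2
      ⟨hab.symm, mem_offRunnerZero.2 ⟨hb, not_dvd_of_mem_of_lt hb (by omega)⟩⟩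
  have hm' : m.offRunnerZero t = ((l.offRunnerZero t).erase a).erase b := by
    rw [offRunnerZero, hm, Finset.filter_erase, Finset.filter_erase, ← offRunnerZero]
  rw [hm', ← Finset.card_erase_add_one ha', ← Finset.card_erase_add_one hb']

end BarPartition

section BarRemoval

variable {t : ℕ} {l m : BarPartition}

theorem BarRemoval.card_offRunnerZero_modEq (h : BarRemoval t l m) :
    (l.offRunnerZero t).card ≡ (m.offRunnerZero t).card [MOD 2] := by
  rcases h with ⟨a, ha, hta, hsub, hm⟩ | ⟨-, hm⟩ | ⟨a, ha, b, hb, hab, hsum, hm⟩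
  · rw [BarPartition.card_offRunnerZero_of_replace ha hta.le hsub hm]
  · rw [BarPartition.offRunnerZero_of_erase_self hm]
  · rw [← BarPartition.card_offRunnerZero_of_erase_pair ha hb hab hsum hm]
    exact Nat.add_modEq_right

theorem card_offRunnerZero_modEq_of_reflTransGen (h : Relation.ReflTransGen (BarRemoval t) l m) :
    (l.offRunnerZero t).card ≡ (m.offRunnerZero t).card [MOD 2] := by
  induction h with
  | refl => rfl
  | tail _ hstep ih => exact ih.trans hstep.card_offRunnerZero_modEq

end BarRemoval

section BarCore

variable {t : ℕ} {κ : BarPartition}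

theorem isBarCore_empty (t : ℕ) : IsBarCore t BarPartition.empty := by
  rintro ν (⟨a, ha, -⟩ | ⟨ht, -⟩ | ⟨a, ha, -⟩)
  exacts [Finset.notMem_empty a ha, Finset.notMem_empty t ht, Finset.notMem_empty a ha]

theorem IsBarCore.self_notMem (hκ : IsBarCore t κ) : t ∉ κ.parts := fun ht =>
  hκ ⟨κ.parts.erase t, fun h => κ.zero_not_mem (Finset.mem_of_mem_erase h)⟩
    (Or.inr (Or.inl ⟨ht, rfl⟩))

theorem IsBarCore.sub_mem_s4 (hκ : IsBarCore t κ) {a : ℕ} (ha : a ∈ κ.parts) (hta : t < a) :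
    a - t ∈ κ.parts := by
  by_contra hsub
  have hzero : 0 ∉ insert (a - t) (κ.parts.erase a) := fun h =>
    (Finset.mem_insert.1 h).elim (Nat.sub_pos_of_lt hta).ne
      fun h => κ.zero_not_mem (Finset.mem_of_mem_erase h)
  exact hκ ⟨_, hzero⟩ (Or.inl ⟨a, ha, hta, hsub, rfl⟩)

theorem IsBarCore.mul_notMem (hκ : IsBarCore t κ) (k : ℕ) : t * k ∉ κ.parts := by
  induction k with
  | zero => exact κ.zero_not_mem
  | succ k ih =>
    rw [Nat.mul_succ]
    intro hmem
    rcases (t * k).eq_zero_or_pos with hzero | hpos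
    · exact hκ.self_notMem (by rwa [hzero, Nat.zero_add] at hmem)
    · have hsub := hκ.sub_mem_s4 hmem (Nat.lt_add_of_pos_left hpos)
      exact ih (by rwa [Nat.add_sub_cancel] at hsub)

theorem IsBarCore.runnerZero_eq_empty (hκ : IsBarCore t κ) : κ.runnerZero t = ∅ :=
  Finset.filter_eq_empty_iff.2 fun _ ha ⟨k, hk⟩ => hκ.mul_notMem k (hk ▸ ha)

theorem IsBarCore.card_offRunnerZero (hκ : IsBarCore t κ) :
    (κ.offRunnerZero t).card = κ.length := by
  rw [← κ.card_runnerZero_add_card_offRunnerZero t, hκ.runnerZero_eq_empty, Finset.card_empty,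
    Nat.zero_add]

theorem IsBarCoreOf.length_modEq {l : BarPartition} (hκ : IsBarCoreOf t l κ) :
    l.length ≡ κ.length + (l.runnerZero t).card [MOD 2] := by
  rw [← l.card_runnerZero_add_card_offRunnerZero t, ← hκ.2.card_offRunnerZero, Nat.add_comm]
  exact (card_offRunnerZero_modEq_of_reflTransGen hκ.1).add_right _

theorem HasEmptyBarCore.length_modEq {l : BarPartition} (hl : HasEmptyBarCore t l) :
    l.length ≡ (l.runnerZero t).card [MOD 2] := by
  have h := IsBarCoreOf.length_modEq ⟨hl, isBarCore_empty t⟩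
  rwa [show BarPartition.empty.length = 0 from Finset.card_empty, Nat.zero_add] at h

end BarCore

theorem length_sub_barCore_sub_barCocore_even_general {t : ℕ} {l κ μ : BarPartition}
    (hκ : IsBarCoreOf t l κ) (hμ : HasEmptyBarCore t μ)
    (hrunner : ∀ k, t * k ∈ l.parts ↔ t * k ∈ μ.parts) :
    Even ((l.length : ℤ) - κ.length - μ.length) := by
  have hmod : l.length ≡ κ.length + μ.length [MOD 2] :=
    calc l.length
      _ ≡ κ.length + (l.runnerZero t).card [MOD 2] := hκ.length_modEq
      _ = κ.length + (μ.runnerZero t).card := by rw [BarPartition.runnerZero_congr hrunner]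
      _ ≡ κ.length + μ.length [MOD 2] := hμ.length_modEq.symm.add_left _
  rw [sub_sub, ← Nat.cast_add, even_iff_two_dvd]
  exact Nat.modEq_iff_dvd.1 hmod.symm

/-- Let `t ≥ 3` be odd. For every bar-partition `λ` with `t`-bar core `κ`
and `t`-bar cocore `μ`, the integer `ℓ(λ) − ℓ(κ) − ℓ(μ)` is even. -/
theorem length_sub_barCore_sub_barCocore_even (t : ℕ) (ht : 3 ≤ t) (htodd : Odd t)
    (l κ μ : BarPartition) (hκ : IsBarCoreOf t l κ) (hμ : IsBarCocoreOf t l μ) :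
    Even ((l.length : ℤ) - κ.length - μ.length) :=
  length_sub_barCore_sub_barCocore_even_general hκ hμ.1 hμ.2.1
end
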